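/- Let d ≥ 1. For every v ∈ {0,1}^d, one has deg(C_v^{d+1}) = (−1)^d · binom(d, |v|) in the Chow ring of the hypercube, where |v| is the number of coordinates of v equal to 1. -/

import Mathlib

/-!
Write `Q` for a multiplier in the Chow ring. On `Q · C_v` two boundary conditions are tracked:
`UpperBound v Q b` says that the vertices above `v` but not below `b` have total contribution
zero, and `LowerBound v Q b'` is the dual condition. With `Q = 1` they hold for `b` the top and
`b'` the bottom of the cube. If `v < u` and `i` is a coordinate with `v_i = 0`, `u_i = 1`, then
relation (R3) says precisely that `UpperBound` holds for `Q · C_u` and `b = u` with coordinate `i`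
switched off (`upperBound_of_cls`). Subtracting both conditions from (R2) gives
`Q C_v² = - ∑_{v < x ≤ b} Q C_x C_v - ∑_{b' ≤ x < v} Q C_x C_v` (`mul_sq_eq`).

Each use of this relation trades a factor `C_v` for a vertex `x` of the interval `[b', b]` and
shortens the interval, so `Q C_v^a` vanishes when `a` exceeds `|b| - |b'| + 1`
(`mul_pow_eq_zero`). In the critical exponent `a = |b| - |b'| + 1` only `x = b` and `x = b'`
survive (`mul_pow_step`). Removing the coordinates in the order prescribed by one maximal chain
through `v`, the resulting coefficient, as a function of `|v| - |b'|` and `|b| - |v|`, satisfies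
Pascal's recursion up to sign; this gives `(-1)^d · binom(d, |v|)` times the class of that chain
(`mul_pow_formula`).

Finally, all maximal chains have the same class: (R3) identifies two chains differing in one
vertex (`square_exchange`), and adjacent transpositions generate the symmetric group
(`permChain_eq`).
-/

open MvPolynomial

namespace ChowCube

/-- The vertices of the hypercube `□^ι = {0,1}^ι`. -/
abbrev Cube (ι : Type) : Type := ι → Fin 2

variable (ι : Type) [Fintype ι] [DecidableEq ι]

/-- The ideal `I_rat(□^ι)` of elements rationally equivalent to zero, generated by
(R1) products over lists of points which are not pairwise comparable,
(R2) `C_u · (Σ_v C_v)`, and (R3) `C_u C_w · (Σ_{v : v_i = u_i} C_v)` for `u_i ≠ w_i`. -/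
noncomputable def Irat : Ideal (MvPolynomial (Cube ι) ℤ) :=
  Ideal.span
    ({ p | ∃ l : List (Cube ι),
        ¬ (l.Pairwise fun u v => u ≤ v ∨ v ≤ u) ∧ p = (l.map X).prod } ∪
     { p | ∃ u : Cube ι, p = X u * ∑ v : Cube ι, X v } ∪
     { p | ∃ u w : Cube ι, ∃ i : ι, u i ≠ w i ∧
         p = X u * X w * ∑ v ∈ Finset.univ.filter (fun v : Cube ι => v i = u i), X v })

/-- The Chow ring of the hypercube, `Chow(□^ι) = Z(□^ι)/I_rat`. -/
abbrev Chow : Type := MvPolynomial (Cube ι) ℤ ⧸ Irat ι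

noncomputable def mk : MvPolynomial (Cube ι) ℤ →ₐ[ℤ] Chow ι :=
  Ideal.Quotient.mkₐ ℤ (Irat ι)

/-- The degree `n` graded piece `Chow^n(□^ι)`. -/
noncomputable def piece (n : ℕ) : Submodule ℤ (Chow ι) :=
  Submodule.map (mk ι).toLinearMap (homogeneousSubmodule (Cube ι) ℤ n)

/-- The number of coordinates equal to `1`. -/
def wt (u : Cube ι) : ℕ := (Finset.univ.filter fun i => u i = 1).card

/-- The `j`-th vertex of the standard maximal chain in `{0,1}^ι`: the indicator
function of the set of the `j` smallest indices. -/
def chainVtx [LinearOrder ι] (j : ℕ) : Cube ι :=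
  fun i => if (Finset.univ.filter fun i' => i' < i).card < j then 1 else 0

/-- The monomial `C_{u_0}⋯C_{u_card ι}` of the standard maximal chain;
its class generates the top graded piece, and the degree map `deg` is the isomorphism
`Chow^{card ι + 1}(□^ι) ≅ ℤ` sending this class to `1`. -/
noncomputable def genMono [LinearOrder ι] : MvPolynomial (Cube ι) ℤ :=
  ∏ j ∈ Finset.range (Fintype.card ι + 1), X (chainVtx ι j)

end ChowCube
namespace ChowCube

/-! ### Relations in the Chow ring -/

section Relations

open scoped Classical

lemma fin2 (a : Fin 2) : a = 0 ∨ a = 1 := by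
  revert a; decide

lemma one_not_le_zero : ¬ (1 : Fin 2) ≤ 0 := by decide

lemma wt_mono {ι : Type} [Fintype ι] {u v : Cube ι} (h : u ≤ v) : wt ι u ≤ wt ι v := by
  apply Finset.card_le_card
  intro i
  simp only [Finset.mem_filter, Finset.mem_univ, true_and]
  intro hi
  have := h i
  rcases fin2 (v i) with h0 | h0
  · rw [hi, h0] at this
    exact absurd this one_not_le_zero
  · exact h0

lemma exists_of_lt {ι : Type} {u v : Cube ι} (h : u < v) : ∃ i, u i = 0 ∧ v i = 1 := by
  obtain ⟨-, i, hi⟩ := Pi.lt_def.mp h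
  refine ⟨i, ?_⟩
  revert hi
  generalize u i = a
  generalize v i = b
  revert a b
  decide

variable {ι : Type} [Fintype ι] [DecidableEq ι]

/-- The class of the generator `C_u` in the Chow ring. -/
noncomputable def cls (u : Cube ι) : Chow ι := mk ι (X u)

lemma mk_eq_zero {p : MvPolynomial (Cube ι) ℤ} (hp : p ∈ Irat ι) : mk ι p = 0 :=
  Ideal.Quotient.eq_zero_iff_mem.mpr hp

lemma cls_mul_eq_zero {u v : Cube ι} (h : ¬ (u ≤ v ∨ v ≤ u)) : cls u * cls v = 0 := by
  rw [cls, cls, ← map_mul]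
  apply mk_eq_zero
  apply Ideal.subset_span
  refine Or.inl (Or.inl ⟨[u, v], ?_, ?_⟩)
  · simpa using h
  · simp

lemma cls_mul_sum (u : Cube ι) : cls u * ∑ v : Cube ι, cls v = 0 := by
  simp only [cls]
  rw [← map_sum, ← map_mul]
  exact mk_eq_zero (Ideal.subset_span (Or.inl (Or.inr ⟨u, rfl⟩)))

lemma cls_mul_cls_mul_sum (u w : Cube ι) (i : ι) (h : u i ≠ w i) :
    cls u * cls w * ∑ v ∈ Finset.univ.filter (fun v : Cube ι => v i = u i), cls v = 0 := by
  simp only [cls]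
  rw [← map_sum, ← map_mul, ← map_mul]
  exact mk_eq_zero (Ideal.subset_span (Or.inr ⟨u, w, i, h, rfl⟩))

lemma wt_update_zero {u : Cube ι} {i : ι} (h : u i = 1) :
    wt ι (Function.update u i 0) + 1 = wt ι u := by
  have : (Finset.univ.filter fun j => Function.update u i 0 j = 1)
      = (Finset.univ.filter fun j => u j = 1).erase i := by
    ext j
    by_cases hj : j = i
    · subst hj; simp
    · simp [hj]
  rw [wt, this, wt, Finset.card_erase_add_one]
  simpa using h

lemma wt_update_one {u : Cube ι} {i : ι} (h : u i = 0) :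
    wt ι (Function.update u i 1) = wt ι u + 1 := by
  have := wt_update_zero (u := Function.update u i 1) (i := i) (by simp)
  rw [← this, Function.update_idem, ← h, Function.update_eq_self]

lemma wt_strict {u v : Cube ι} (h : u < v) : wt ι u < wt ι v := by
  obtain ⟨i, hu, hv⟩ := exists_of_lt h
  have h1 : u ≤ Function.update v i 0 := by
    intro j
    by_cases hj : j = i
    · subst hj; simp [hu]
    · simpa [hj] using h.le j
  have := wt_mono h1
  have := wt_update_zero hv
  omega

/-! ### Localized powers of a vertex class -/

/-- On the multiplier `Q`, the vertices `x > v` that are not below `b` contribute nothing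
in total to products with `C_v`. -/
def UpperBound (v : Cube ι) (Q : Chow ι) (b : Cube ι) : Prop :=
  Q * cls v * ∑ x ∈ Finset.univ.filter (fun x => v < x ∧ ¬ x ≤ b), cls x = 0

/-- On the multiplier `Q`, the vertices `x < v` that are not above `b` contribute nothing
in total to products with `C_v`. -/
def LowerBound (v : Cube ι) (Q : Chow ι) (b : Cube ι) : Prop :=
  Q * cls v * ∑ x ∈ Finset.univ.filter (fun x => x < v ∧ ¬ b ≤ x), cls x = 0

lemma upperBound_of_forall_le {v b : Cube ι} (Q : Chow ι) (h : ∀ x, x ≤ b) :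
    UpperBound v Q b := by
  unfold UpperBound
  rw [Finset.filter_false_of_mem fun x _ hx => hx.2 (h x), Finset.sum_empty, mul_zero]

lemma lowerBound_of_forall_ge {v b : Cube ι} (Q : Chow ι) (h : ∀ x, b ≤ x) :
    LowerBound v Q b := by
  unfold LowerBound
  rw [Finset.filter_false_of_mem fun x _ hx => hx.2 (h x), Finset.sum_empty, mul_zero]

lemma UpperBound.mul_right {v b : Cube ι} {Q : Chow ι} (h : UpperBound v Q b) (r : Chow ι) :
    UpperBound v (Q * r) b := by
  unfold UpperBound at *
  linear_combination r * h

lemma LowerBound.mul_right {v b : Cube ι} {Q : Chow ι} (h : LowerBound v Q b) (r : Chow ι) :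
    LowerBound v (Q * r) b := by
  unfold LowerBound at *
  linear_combination r * h

/-- The sum of `C_x` may be compared termwise over vertices `x` comparable to `u` and `v`. -/
lemma cls_mul_sum_congr {u v : Cube ι} {p q : Cube ι → Prop} [DecidablePred p] [DecidablePred q]
    (h : ∀ x, (u ≤ x ∨ x ≤ u) → (v ≤ x ∨ x ≤ v) → (p x ↔ q x)) :
    cls u * cls v * ∑ x ∈ Finset.univ.filter p, cls x =
      cls u * cls v * ∑ x ∈ Finset.univ.filter q, cls x := by
  rw [Finset.sum_filter, Finset.sum_filter, Finset.mul_sum, Finset.mul_sum]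
  refine Finset.sum_congr rfl fun x _ => ?_
  by_cases hu : u ≤ x ∨ x ≤ u
  · by_cases hv : v ≤ x ∨ x ≤ v
    · simp only [h x hu hv]
    · have h0 := cls_mul_eq_zero hv
      have : cls u * cls v * cls x = 0 := by rw [mul_assoc, h0, mul_zero]
      split_ifs <;> simp [this]
  · have h0 := cls_mul_eq_zero hu
    have : cls u * cls v * cls x = 0 := by rw [mul_right_comm, h0, zero_mul]
    split_ifs <;> simp [this]

/-- Relation (R3) for `u`, `v` and `i`: among the `x` comparable to both `u` and `v`, those with
`x_i = 1` are exactly those above `v` and not below `u` with coordinate `i` switched off. -/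
lemma upperBound_of_cls {v u : Cube ι} (Q : Chow ι) {i : ι} (hv : v i = 0) (hu : u i = 1) :
    UpperBound v (Q * cls u) (Function.update u i 0) := by
  have h := cls_mul_cls_mul_sum u v i (by rw [hv, hu]; decide)
  rw [cls_mul_sum_congr (q := fun x => v < x ∧ ¬ x ≤ Function.update u i 0)] at h
  · unfold UpperBound
    linear_combination Q * h
  · intro x hxu hxv
    rw [hu]
    constructor
    · intro hx
      have hxv' : ¬ x ≤ v := fun hle => by
        have := hle i
        rw [hx, hv] at this
        exact absurd this one_not_le_zero
      refine ⟨lt_of_le_not_ge (hxv.resolve_right hxv') hxv', fun hle => ?_⟩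
      have := hle i
      rw [hx, Function.update_self] at this
      exact absurd this one_not_le_zero
    · rintro ⟨-, hx⟩
      refine (fin2 (x i)).resolve_left fun h0 => ?_
      rcases hxu with hle | hle
      · have := hle i
        rw [hu, h0] at this
        exact absurd this one_not_le_zero
      · exact hx (by
          intro j
          by_cases hj : j = i
          · subst hj; simp [h0]
          · simpa [hj] using hle j)

/-- The order dual of `upperBound_of_cls`. -/
lemma lowerBound_of_cls {v u : Cube ι} (Q : Chow ι) {i : ι} (hv : v i = 1) (hu : u i = 0) :
    LowerBound v (Q * cls u) (Function.update u i 1) := by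
  have h := cls_mul_cls_mul_sum u v i (by rw [hv, hu]; decide)
  rw [cls_mul_sum_congr (q := fun x => x < v ∧ ¬ Function.update u i 1 ≤ x)] at h
  · unfold LowerBound
    linear_combination Q * h
  · intro x hxu hxv
    rw [hu]
    constructor
    · intro hx
      have hxv' : ¬ v ≤ x := fun hle => by
        have := hle i
        rw [hx, hv] at this
        exact absurd this one_not_le_zero
      refine ⟨lt_of_le_not_ge (hxv.resolve_left hxv') hxv', fun hle => ?_⟩
      have := hle i
      rw [hx, Function.update_self] at this
      exact absurd this one_not_le_zero
    · rintro ⟨-, hx⟩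
      refine (fin2 (x i)).resolve_right fun h0 => ?_
      rcases hxu with hle | hle
      · exact hx (by
          intro j
          by_cases hj : j = i
          · subst hj; simp [h0]
          · simpa [hj] using hle j)
      · have := hle i
        rw [hu, h0] at this
        exact absurd this one_not_le_zero

/-- The localized self-intersection relation: subtracting the two boundary relations from
`C_v · Σ_x C_x = 0` leaves only vertices in the interval `[b', b]`. -/
lemma mul_sq_eq {v b b' : Cube ι} {Q : Chow ι} (hU : UpperBound v Q b) (hL : LowerBound v Q b') :
    Q * cls v ^ 2 =
      - (∑ x ∈ Finset.univ.filter (fun x => v < x ∧ x ≤ b), Q * cls x * cls v)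
      - ∑ x ∈ Finset.univ.filter (fun x => x < v ∧ b' ≤ x), Q * cls x * cls v := by
  have h0 : cls v * ∑ x ∈ Finset.univ.filter (fun x => v ≤ x ∨ x ≤ v), cls x = 0 := by
    rw [← cls_mul_sum v, Finset.sum_filter, Finset.mul_sum, Finset.mul_sum]
    refine Finset.sum_congr rfl fun x _ => ?_
    split_ifs with h
    · rfl
    · rw [cls_mul_eq_zero h, mul_zero]
  have h1 : ∑ x ∈ Finset.univ.filter (fun x => v ≤ x ∨ x ≤ v), cls x =
      cls v + (∑ x ∈ Finset.univ.filter (fun x => v < x ∧ x ≤ b), cls x)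
      + (∑ x ∈ Finset.univ.filter (fun x => v < x ∧ ¬ x ≤ b), cls x)
      + (∑ x ∈ Finset.univ.filter (fun x => x < v ∧ b' ≤ x), cls x)
      + (∑ x ∈ Finset.univ.filter (fun x => x < v ∧ ¬ b' ≤ x), cls x) := by
    have hv : cls v = ∑ x : Cube ι, if x = v then cls x else 0 := by simp
    conv_rhs => rw [hv]
    simp only [Finset.sum_filter, ← Finset.sum_add_distrib]
    refine Finset.sum_congr rfl fun x _ => ?_
    by_cases hx : x = v
    · subst hx; simp
    · by_cases hlt : v < x
      · have := hlt.not_gt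
        by_cases hb : x ≤ b <;> simp [hx, hlt, this, hb, hlt.le]
      · by_cases hgt : x < v
        · by_cases hb : b' ≤ x <;> simp [hx, hlt, hgt, hb, hgt.le]
        · have e1 : ¬ v ≤ x := fun h => hlt (lt_of_le_of_ne h (Ne.symm hx))
          have e2 : ¬ x ≤ v := fun h => hgt (lt_of_le_of_ne h hx)
          simp [hx, hlt, hgt, e1, e2]
  rw [h1] at h0
  unfold UpperBound at hU
  unfold LowerBound at hL
  simp only [← Finset.sum_mul, ← Finset.mul_sum]
  linear_combination Q * h0 - hU - hL

lemma mul_pow_eq {v b b' : Cube ι} {Q : Chow ι} (hU : UpperBound v Q b) (hL : LowerBound v Q b')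
    (N : ℕ) :
    Q * cls v ^ (N + 2) =
      - (∑ x ∈ Finset.univ.filter (fun x => v < x ∧ x ≤ b), Q * cls x * cls v ^ (N + 1))
      - ∑ x ∈ Finset.univ.filter (fun x => x < v ∧ b' ≤ x), Q * cls x * cls v ^ (N + 1) := by
  have h := mul_sq_eq hU hL
  simp only [pow_succ' _ N, ← mul_assoc, ← Finset.sum_mul] at *
  linear_combination cls v ^ N * h

/-- High powers of `C_v` vanish when the interval `[b', b]` is too short. -/
lemma mul_pow_eq_zero {v : Cube ι} (N : ℕ) : ∀ {b b' : Cube ι} {Q : Chow ι}, b' ≤ v → v ≤ b →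
    UpperBound v Q b → LowerBound v Q b' → wt ι b < wt ι b' + N → Q * cls v ^ (N + 1) = 0 := by
  induction N with
  | zero =>
    intro b b' Q h1 h2 _ _ h
    have := wt_mono (h1.trans h2)
    omega
  | succ N ih =>
    intro b b' Q h1 h2 hU hL h
    rw [mul_pow_eq hU hL, Finset.sum_eq_zero, Finset.sum_eq_zero, neg_zero, sub_zero]
    · intro x hx
      simp only [Finset.mem_filter, Finset.mem_univ, true_and] at hx
      obtain ⟨i, hi, hi'⟩ := exists_of_lt hx.1
      refine ih ?_ h2 (hU.mul_right _) (lowerBound_of_cls Q hi' hi) ?_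
      · exact update_le_iff.mpr ⟨hi'.ge, fun j _ => hx.1.le j⟩
      · have := wt_mono hx.2
        have := wt_update_one hi
        omega
    · intro x hx
      simp only [Finset.mem_filter, Finset.mem_univ, true_and] at hx
      obtain ⟨i, hi, hi'⟩ := exists_of_lt hx.1
      refine ih h1 ?_ (upperBound_of_cls Q hi hi') (hL.mul_right _) ?_
      · exact le_update_iff.mpr ⟨hi.le, fun j _ => hx.1.le j⟩
      · have := wt_mono hx.2
        have := wt_update_zero hi'
        omega

/-- In the critical exponent only the endpoints of `[b', b]` survive in the localized
self-intersection relation. -/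
lemma mul_pow_step {v b b' : Cube ι} {Q : Chow ι} {N : ℕ} (h1 : b' ≤ v) (h2 : v ≤ b)
    (hU : UpperBound v Q b) (hL : LowerBound v Q b') (h : wt ι b = wt ι b' + (N + 1)) :
    Q * cls v ^ (N + 2) =
      - (if v < b then Q * cls b * cls v ^ (N + 1) else 0)
      - (if b' < v then Q * cls b' * cls v ^ (N + 1) else 0) := by
  rw [mul_pow_eq hU hL]
  congr 1
  · congr 1
    rw [Finset.sum_filter, Finset.sum_eq_single b]
    · simp
    · intro x _ hxb
      split_ifs with hx
      · obtain ⟨i, hi, hi'⟩ := exists_of_lt hx.1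
        refine mul_pow_eq_zero N h1 ?_ (upperBound_of_cls Q hi hi') (hL.mul_right _) ?_
        · exact le_update_iff.mpr ⟨hi.le, fun j _ => hx.1.le j⟩
        · have := wt_strict (lt_of_le_of_ne hx.2 hxb)
          have := wt_update_zero hi'
          omega
      · rfl
    · simp
  · rw [Finset.sum_filter, Finset.sum_eq_single b']
    · simp
    · intro x _ hxb
      split_ifs with hx
      · obtain ⟨i, hi, hi'⟩ := exists_of_lt hx.1
        refine mul_pow_eq_zero N ?_ h2 (hU.mul_right _) (lowerBound_of_cls Q hi' hi) ?_
        · exact update_le_iff.mpr ⟨hi'.ge, fun j _ => hx.1.le j⟩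
        · have := wt_strict (lt_of_le_of_ne hx.2 (Ne.symm hxb))
          have := wt_update_one hi
          omega
      · rfl
    · simp

/-! ### Maximal chains -/

/-- Two chains `x < y < z` and `x < y' < z` through the two middle vertices of a square have
the same class: the coordinate relations at `i` and `j` have all their other terms in common. -/
lemma square_exchange {x y y' z : Cube ι} {i j : ι} (hij : i ≠ j) (hxi : x i = 0) (hxj : x j = 0)
    (hy : y = Function.update x i 1) (hy' : y' = Function.update x j 1)
    (hz : z = Function.update (Function.update x i 1) j 1) :
    cls x * cls y * cls z = cls x * cls y' * cls z := by
  have key : ∀ i j : ι, i ≠ j → x i = 0 → x j = 0 →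
      z = Function.update (Function.update x i 1) j 1 →
      cls z * cls x * cls (Function.update x i 1) =
        - (cls z * cls x * ∑ u ∈ Finset.univ.filter (fun u => u i = 1 ∧ u j = 1), cls u) := by
    intro i j hij hxi hxj hz
    have hzi : z i = 1 := by rw [hz]; simp [hij]
    have hzj : z j = 1 := by rw [hz]; simp
    have h := cls_mul_cls_mul_sum z x i (by rw [hxi, hzi]; decide)
    rw [cls_mul_sum_congr
      (q := fun u => u = Function.update x i 1 ∨ (u i = 1 ∧ u j = 1))] at h
    · rw [Finset.filter_or, Finset.sum_union, Finset.filter_eq' Finset.univ,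
        if_pos (Finset.mem_univ _), Finset.sum_singleton] at h
      · linear_combination h
      · rw [Finset.disjoint_left]
        intro u hu hu'
        simp only [Finset.mem_filter, Finset.mem_univ, true_and] at hu hu'
        rw [hu] at hu'
        simp [hij.symm, hxj] at hu'
    · intro u huz hux
      rw [hzi]
      constructor
      · intro hu
        rcases fin2 (u j) with h0 | h0
        · left
          have e1 : x ≤ u := hux.resolve_right fun hle => by
            have := hle i
            rw [hu, hxi] at this
            exact absurd this one_not_le_zero
          have e2 : u ≤ z := huz.resolve_left fun hle => by
            have := hle j
            rw [h0, hzj] at this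
            exact absurd this one_not_le_zero
          ext1 k
          by_cases hki : k = i
          · subst hki; simp [hu]
          · by_cases hkj : k = j
            · subst hkj; simp [hki, h0, hxj]
            · rw [Function.update_of_ne hki]
              refine le_antisymm ?_ (e1 k)
              have := e2 k
              rwa [hz, Function.update_of_ne hkj, Function.update_of_ne hki] at this
        · exact Or.inr ⟨hu, h0⟩
      · rintro (h | h)
        · rw [h]; simp
        · exact h.1
  have k1 := key i j hij hxi hxj hz
  have k2 := key j i hij.symm hxj hxi (by rw [hz, Function.update_comm hij])
  have hc : (Finset.univ.filter (fun u : Cube ι => u i = 1 ∧ u j = 1))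
      = Finset.univ.filter (fun u : Cube ι => u j = 1 ∧ u i = 1) := by
    simp only [and_comm]
  subst hy hy'
  rw [hc] at k1
  linear_combination k1 - k2

end Relations

section Chains

variable {d : ℕ}

/-- The `j`-th vertex of the maximal chain obtained by switching on the coordinates in the order
`σ⁻¹ 0, σ⁻¹ 1, …`. -/
def permVtx (σ : Equiv.Perm (Fin d)) (j : ℕ) : Cube (Fin d) :=
  fun i => if (σ i : ℕ) < j then 1 else 0

lemma permVtx_succ (σ : Equiv.Perm (Fin d)) {j : ℕ} (hj : j < d) :
    permVtx σ (j + 1) = Function.update (permVtx σ j) (σ.symm ⟨j, hj⟩) 1 := by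
  ext1 i
  by_cases hi : i = σ.symm ⟨j, hj⟩
  · subst hi; simp [permVtx]
  · have : (σ i : ℕ) ≠ j := fun h => hi (by
      rw [Equiv.eq_symm_apply]; exact Fin.ext h)
    rw [Function.update_of_ne hi]
    simp only [permVtx]
    congr 1
    exact propext (by omega)

lemma permVtx_mono (σ : Equiv.Perm (Fin d)) {j k : ℕ} (h : j ≤ k) :
    permVtx σ j ≤ permVtx σ k := by
  intro i
  simp only [permVtx]
  split_ifs with h1 h2
  · exact le_rfl
  · omega
  · exact Fin.zero_le _
  · exact le_rfl

lemma wt_permVtx (σ : Equiv.Perm (Fin d)) {j : ℕ} (hj : j ≤ d) :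
    wt (Fin d) (permVtx σ j) = j := by
  induction j with
  | zero => simp [wt, permVtx]
  | succ j ih =>
    rw [permVtx_succ σ hj, wt_update_one, ih (by omega)]
    simp [permVtx]

lemma permVtx_lt (σ : Equiv.Perm (Fin d)) {j k : ℕ} (h : j < k) (hk : k ≤ d) :
    permVtx σ j < permVtx σ k := by
  refine lt_of_le_of_ne (permVtx_mono σ h.le) fun he => ?_
  have := congrArg (wt (Fin d)) he
  rw [wt_permVtx σ (by omega), wt_permVtx σ hk] at this
  omega

/-- The class of the maximal chain attached to `σ`. -/
noncomputable def permChain (σ : Equiv.Perm (Fin d)) : Chow (Fin d) :=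
  ∏ j ∈ Finset.range (d + 1), cls (permVtx σ j)

/-- Swapping two adjacent values of `σ` changes only the vertex at level `k + 1`, so
`square_exchange` applies. -/
lemma permChain_swap {d : ℕ} (k : Fin d) (σ : Equiv.Perm (Fin (d + 1))) :
    permChain (Equiv.swap k.castSucc k.succ * σ) = permChain σ := by
  set τ := Equiv.swap k.castSucc k.succ * σ with hτ
  have hval : ∀ i, (τ i : ℕ) =
      if (σ i : ℕ) = k then (k : ℕ) + 1 else if (σ i : ℕ) = k + 1 then (k : ℕ) else σ i := by
    intro i
    rw [hτ, Equiv.Perm.mul_apply, Equiv.swap_apply_def]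
    simp only [Fin.ext_iff, Fin.val_castSucc, Fin.val_succ]
    split_ifs <;> simp
  have hne : ∀ j : ℕ, j ≠ k + 1 → permVtx τ j = permVtx σ j := by
    intro j hj
    ext1 i
    simp only [permVtx, hval]
    congr 1
    apply propext
    split_ifs <;> omega
  have hk := k.2
  have hτ0 : τ.symm ⟨k, by omega⟩ = σ.symm ⟨k + 1, by omega⟩ := by
    rw [Equiv.symm_apply_eq]
    apply Fin.ext
    rw [hval]
    simp
  have hij : σ.symm ⟨k, by omega⟩ ≠ σ.symm ⟨k + 1, by omega⟩ := by
    intro h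
    have := congrArg Fin.val (σ.symm.injective h)
    simp at this
  have hex := square_exchange (x := permVtx σ k) (y := permVtx σ (k + 1))
    (y' := permVtx τ (k + 1)) (z := permVtx σ (k + 2)) hij
    (by simp [permVtx]) (by simp [permVtx]) (permVtx_succ σ _)
    (by rw [permVtx_succ τ (by omega), hτ0, hne k (by omega)])
    (by rw [permVtx_succ σ (j := k + 1) (by omega), permVtx_succ σ (j := k) (by omega)])
  have hsplit : Finset.range (d + 1 + 1) =
      insert (k : ℕ) (insert ((k : ℕ) + 1) (insert ((k : ℕ) + 2)
        ((Finset.range (d + 1 + 1)).filter fun j : ℕ =>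
          j ≠ k ∧ j ≠ k + 1 ∧ j ≠ k + 2))) := by
    ext j
    simp only [Finset.mem_range, Finset.mem_insert, Finset.mem_filter]
    omega
  unfold permChain
  rw [hsplit]
  rw [Finset.prod_insert (by simp), Finset.prod_insert (by simp), Finset.prod_insert (by simp),
    Finset.prod_insert (by simp), Finset.prod_insert (by simp), Finset.prod_insert (by simp)]
  rw [hne k (by omega), hne (k + 2) (by omega)]
  rw [Finset.prod_congr rfl (g := fun j => cls (permVtx σ j))]
  · linear_combination (-∏ j ∈ (Finset.range (d + 1 + 1)).filter
      (fun j : ℕ => j ≠ k ∧ j ≠ k + 1 ∧ j ≠ k + 2), cls (permVtx σ j)) * hex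
  · intro j hj
    simp only [Finset.mem_filter] at hj
    rw [hne j hj.2.2.1]

/-- All maximal chains have the same class, since adjacent transpositions generate the
symmetric group. -/
lemma permChain_eq {d : ℕ} (σ : Equiv.Perm (Fin (d + 1))) : permChain σ = permChain 1 := by
  have h : σ ∈ Submonoid.closure
      (Set.range fun i : Fin d => Equiv.swap i.castSucc i.succ) := by
    rw [Equiv.Perm.mclosure_swap_castSucc_succ]; trivial
  induction h using Submonoid.closure_induction_left with
  | one => rfl
  | mul_left x hx y _ ih =>
    obtain ⟨k, rfl⟩ := hx
    rw [permChain_swap, ih]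

lemma mk_genMono : mk (Fin d) (genMono (Fin d)) = permChain 1 := by
  rw [genMono, map_prod, permChain, Fintype.card_fin]
  refine Finset.prod_congr rfl fun j _ => ?_
  rw [cls]
  congr 2
  ext1 i
  simp only [chainVtx, permVtx, Equiv.Perm.one_apply]
  rw [show (Finset.univ.filter fun i' => i' < i) = Finset.Iio i by ext; simp, Fin.card_Iio]
  congr

lemma wt_le (v : Cube (Fin d)) : wt (Fin d) v ≤ d :=
  (Finset.card_le_univ _).trans_eq (Fintype.card_fin d)

/-- Every vertex lies on the maximal chain of some permutation. -/
lemma exists_permVtx (v : Cube (Fin d)) :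
    ∃ σ : Equiv.Perm (Fin d), permVtx σ (wt (Fin d) v) = v := by
  have hcard : Fintype.card {i // v i = 1}
      = Fintype.card {j : Fin d // (j : ℕ) < wt (Fin d) v} := by
    have hw : wt (Fin d) v ≤ d := wt_le v
    rw [Fintype.card_subtype, Fintype.card_subtype, Fin.card_filter_val_lt, min_eq_right hw, wt]
  let e := Fintype.equivOfCardEq hcard
  refine ⟨e.extendSubtype, ?_⟩
  ext1 i
  simp only [permVtx]
  rcases fin2 (v i) with h | h
  · rw [h, if_neg]
    exact e.extendSubtype_not_mem i (by rw [h]; decide)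
  · rw [h, if_pos]
    exact e.extendSubtype_mem i h

/-- The localized power formula at level `k + p`, on the interval from level `k` to level
`k + p + q` of a maximal chain. The multiplier `Q` plays the role of the product over the chain
vertices outside these levels, and enters only through the requirement that multiplying it by the
vertices of the interval gives `G`. The coefficient comes from Pascal's recursion. -/
lemma mul_pow_formula (σ : Equiv.Perm (Fin d)) (G : Chow (Fin d)) (N : ℕ) :
    ∀ (k p q : ℕ) (Q : Chow (Fin d)), p + q = N → k + p + q ≤ d →
      UpperBound (permVtx σ (k + p)) Q (permVtx σ (k + p + q)) →
      LowerBound (permVtx σ (k + p)) Q (permVtx σ k) →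
      Q * ∏ j ∈ Finset.Icc k (k + p + q), cls (permVtx σ j) = G →
      Q * cls (permVtx σ (k + p)) ^ (N + 1) = ((-1 : ℤ) ^ N * (Nat.choose N p : ℤ)) • G := by
  induction N with
  | zero =>
    intro k p q Q hpq hd hU hL hG
    obtain ⟨rfl, rfl⟩ : p = 0 ∧ q = 0 := by omega
    simpa using hG
  | succ N ih =>
    intro k p q Q hpq hd hU hL hG
    rw [mul_pow_step (permVtx_mono σ (by omega)) (permVtx_mono σ (by omega)) hU hL (N := N)
      (by rw [wt_permVtx σ hd, wt_permVtx σ (by omega)]; omega)]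
    have hup : ∀ q', q = q' + 1 →
        Q * cls (permVtx σ (k + p + q)) * cls (permVtx σ (k + p)) ^ (N + 1) =
          ((-1 : ℤ) ^ N * (Nat.choose N p : ℤ)) • G := by
      rintro q' rfl
      have hs := permVtx_succ σ (j := k + p + q') (by omega)
      have h0 : Function.update (permVtx σ (k + p + q')) (σ.symm ⟨k + p + q', by omega⟩) 0 =
          permVtx σ (k + p + q') :=
        Function.update_eq_iff.mpr ⟨by simp [permVtx], fun _ _ => rfl⟩
      refine ih k p q' _ (by omega) (by omega) ?_ (hL.mul_right _) ?_
      · have := upperBound_of_cls (v := permVtx σ (k + p)) (u := permVtx σ (k + p + (q' + 1))) Q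
          (i := σ.symm ⟨k + p + q', by omega⟩) (by simp [permVtx]) (by simp [permVtx])
        rw [← add_assoc, hs, Function.update_idem, h0] at this
        rwa [← add_assoc, hs]
      · rw [← hG, ← add_assoc, Finset.prod_Icc_succ_top (by omega)]
        ring
    have hlo : ∀ p', p = p' + 1 →
        Q * cls (permVtx σ k) * cls (permVtx σ (k + p)) ^ (N + 1) =
          ((-1 : ℤ) ^ N * (Nat.choose N p' : ℤ)) • G := by
      rintro p' rfl
      have hs := permVtx_succ σ (j := k) (by omega)
      have e : k + (p' + 1) = k + 1 + p' := by omega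
      rw [e] at hU hL hG ⊢
      refine ih (k + 1) p' q _ (by omega) (by omega) (hU.mul_right _) ?_ ?_
      · rw [hs]
        exact lowerBound_of_cls Q (by simp [permVtx]; omega) (by simp [permVtx])
      · rw [← hG, ← Finset.mul_prod_Ioc_eq_prod_Icc (a := k) (by omega)]
        rw [show Finset.Icc (k + 1) (k + 1 + p' + q) = Finset.Ioc k (k + 1 + p' + q) by
          ext; simp only [Finset.mem_Icc, Finset.mem_Ioc]; omega]
        ring
    rcases p with _ | p <;> rcases q with _ | q
    · omega
    · rw [if_pos (permVtx_lt σ (by omega) hd), if_neg (by simp), hup q rfl]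
      simp [pow_succ]
    · rw [if_neg (by simp), if_pos (permVtx_lt σ (by omega) (by omega)), hlo p rfl]
      obtain rfl : N = p := by omega
      simp [pow_succ]
    · rw [if_pos (permVtx_lt σ (by omega) hd), if_pos (permVtx_lt σ (by omega) (by omega)),
        hup q rfl, hlo p rfl, Nat.choose_succ_succ, ← neg_smul, ← sub_smul]
      congr 1
      push_cast
      ring

end Chains

end ChowCube

/-- **Proposition 4.6**: for every `v ∈ {0,1}^d`,
`deg(C_v^{d+1}) = (−1)^d · binom(d, |v|)` in `Chow(□^d)`, expressed against the
generator of `Chow^{d+1}(□^d)` of degree `1`. -/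
theorem ChowCube.deg_pow_eq
    (d : ℕ) (hd : 1 ≤ d) (v : ChowCube.Cube (Fin d)) :
    ChowCube.mk (Fin d) (MvPolynomial.X v ^ (d + 1)) =
      ((-1 : ℤ) ^ d * (Nat.choose d (ChowCube.wt (Fin d) v) : ℤ)) •
        ChowCube.mk (Fin d) (ChowCube.genMono (Fin d)) := by
  obtain ⟨σ, hσ⟩ := ChowCube.exists_permVtx v
  have hw : ChowCube.wt (Fin d) v ≤ d := ChowCube.wt_le v
  obtain ⟨q, hq⟩ := Nat.exists_eq_add_of_le hw
  have hG : ChowCube.mk (Fin d) (ChowCube.genMono (Fin d)) = ChowCube.permChain σ := by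
    rw [ChowCube.mk_genMono]
    obtain ⟨d, rfl⟩ := Nat.exists_eq_add_of_le' hd
    rw [ChowCube.permChain_eq σ]
  -- Start from the whole cube, where both boundary conditions are vacuous.
  have h := ChowCube.mul_pow_formula σ (ChowCube.permChain σ) d 0 (ChowCube.wt (Fin d) v) q 1
    hq.symm (by omega) ?_ ?_ ?_
  · rw [zero_add, hσ, one_mul] at h
    rw [map_pow, hG]
    exact h
  · refine ChowCube.upperBound_of_forall_le _ fun x i => ?_
    have : ChowCube.permVtx σ (0 + ChowCube.wt (Fin d) v + q) i = 1 := by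
      have := (σ i).2
      exact if_pos (by omega)
    rw [this]
    exact Fin.le_last _
  · exact ChowCube.lowerBound_of_forall_ge _ fun x i => by simp [ChowCube.permVtx]
  · rw [one_mul, ChowCube.permChain]
    refine Finset.prod_congr ?_ fun _ _ => rfl
    ext j
    simp only [Finset.mem_Icc, Finset.mem_range]
    omega
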